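/- arXiv:1103.1462 — 5 statements merged into one kernel-verified Lean document; each statement's English description precedes it below -/
import Mathlib

section
/- Let γ : [a, b] → ℂ (a < b) be a piecewise continuously differentiable curve and let f, g : ℂ → ℂ be continuous and nowhere-vanishing on an open set containing the image of γ. Then the complex multiplicative integral is multiplicative as a set equality: MInt(f·g, γ) = { w₁ · w₂ : w₁ ∈ MInt(f, γ), w₂ ∈ MInt(g, γ) }. -/
open Complex

/-- A curve `γ` is piecewise continuously differentiable on `[a, b]` if it is continuous
there and `[a, b]` splits into finitely many subintervals on each of which `γ` is `C¹`. -/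
def PiecewiseC1On (γ : ℝ → ℂ) (a b : ℝ) : Prop :=
  ContinuousOn γ (Set.Icc a b) ∧
  ∃ (m : ℕ) (t : ℕ → ℝ), 0 < m ∧ t 0 = a ∧ t m = b ∧
    (∀ k < m, t k < t (k + 1)) ∧
    ∀ k < m, ContDiffOn ℝ 1 γ (Set.Icc (t k) (t (k + 1)))

/-- `h` is a continuous logarithm of `f` along the curve `γ` on `[a, b]`. -/
def IsContinuousLog (f : ℂ → ℂ) (γ : ℝ → ℂ) (a b : ℝ) (h : ℝ → ℂ) : Prop :=
  ContinuousOn h (Set.Icc a b) ∧ ∀ t ∈ Set.Icc a b, Complex.exp (h t) = f (γ t)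

/-- The set of branch values of the complex multiplicative integral of `f` along `γ`. -/
def MInt (f : ℂ → ℂ) (γ : ℝ → ℂ) (a b : ℝ) : Set ℂ :=
  {w | ∃ h : ℝ → ℂ, IsContinuousLog f γ a b h ∧
    w = Complex.exp (∫ t in a..b, h t * deriv γ t)}

theorem exists_isContinuousLog_aux (a b : ℝ) (hab : a < b) (γ : ℝ → ℂ)
    (hγ : ContinuousOn γ (Set.Icc a b))
    (U : Set ℂ) (hγU : ∀ t ∈ Set.Icc a b, γ t ∈ U)
    (f : ℂ → ℂ) (hf : ContinuousOn f U) (hfne : ∀ z ∈ U, f z ≠ 0) :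
    ∃ h, IsContinuousLog f γ a b h := by
  have hc : ContinuousOn (fun t => f (γ t)) (Set.Icc a b) := hf.comp hγ hγU
  let F : C(ℝ, ℂ) := ⟨Set.IccExtend hab.le ((Set.Icc a b).domRestrict fun t => f (γ t)),
    (continuousOn_iff_continuous_domRestrict.mp hc).Icc_extend'⟩
  have hF : ∀ t, F t ≠ 0 := fun t => hfne _ (hγU _ (Set.projIcc a b hab.le t).2)
  obtain ⟨h, ⟨-, hh⟩, -⟩ := isCoveringMapOn_exp.existsUnique_continuousMap_lifts F
    (a₀ := a) (exp_log (hF a)) hF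
  refine ⟨h, h.continuous.continuousOn, fun t ht => ?_⟩
  have := congrFun hh t
  simp only [Function.comp_apply] at this
  rw [this]
  exact Set.IccExtend_of_mem hab.le ((Set.Icc a b).domRestrict fun t => f (γ t)) ht

theorem intervalIntegrable_deriv_aux (a b : ℝ) (γ : ℝ → ℂ) (hγ : PiecewiseC1On γ a b) :
    IntervalIntegrable (deriv γ) MeasureTheory.volume a b := by
  obtain ⟨-, m, t, -, rfl, rfl, hlt, hC⟩ := hγ
  refine IntervalIntegrable.trans_iterate fun k hk => ?_
  have h1 := (hC k hk).continuousOn_derivWithin (uniqueDiffOn_Icc (hlt k hk)) le_rfl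
  rw [← Set.uIcc_of_le (hlt k hk).le] at h1
  refine h1.intervalIntegrable.congr_uIoo fun x hx => ?_
  rw [Set.uIoo_of_le (hlt k hk).le] at hx
  rw [Set.uIcc_of_le (hlt k hk).le]
  exact derivWithin_of_mem_nhds (Icc_mem_nhds hx.1 hx.2)

/-- Theorem 6 (2nd multiplicative property): the complex multiplicative integral of a
product is the set product of the complex multiplicative integrals:
`MInt (f·g, γ) = { w₁·w₂ : w₁ ∈ MInt (f, γ), w₂ ∈ MInt (g, γ) }`. -/
theorem multiplicative_integral_mul
    (a b : ℝ) (hab : a < b)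
    (γ : ℝ → ℂ) (hγ : PiecewiseC1On γ a b)
    (U : Set ℂ) (hU : IsOpen U) (hγU : ∀ t ∈ Set.Icc a b, γ t ∈ U)
    (f g : ℂ → ℂ) (hf : ContinuousOn f U) (hg : ContinuousOn g U)
    (hfne : ∀ z ∈ U, f z ≠ 0) (hgne : ∀ z ∈ U, g z ≠ 0) :
    MInt (fun z => f z * g z) γ a b =
      {w | ∃ w₁ ∈ MInt f γ a b, ∃ w₂ ∈ MInt g γ a b, w = w₁ * w₂} := by
  have hd := intervalIntegrable_deriv_aux a b γ hγ
  have hi : ∀ h : ℝ → ℂ, ContinuousOn h (Set.Icc a b) →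
      IntervalIntegrable (fun t => h t * deriv γ t) MeasureTheory.volume a b := fun h hh =>
    hd.continuousOn_mul (by rwa [Set.uIcc_of_le hab.le])
  ext w
  constructor
  · rintro ⟨h, ⟨hc, he⟩, rfl⟩
    obtain ⟨k, hk, hke⟩ := exists_isContinuousLog_aux a b hab γ hγ.1 U hγU f hf hfne
    refine ⟨_, ⟨k, ⟨hk, hke⟩, rfl⟩, _, ⟨fun t => h t - k t, ⟨hc.sub hk, fun t ht => ?_⟩, rfl⟩, ?_⟩
    · rw [exp_sub, he t ht, hke t ht, mul_div_cancel_left₀ _ (hfne _ (hγU t ht))]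
    · rw [← exp_add, ← intervalIntegral.integral_add (hi k hk) (hi (fun t => h t - k t) (hc.sub hk))]
      congr 2
      ext t
      ring
  · rintro ⟨_, ⟨h, ⟨hc, he⟩, rfl⟩, _, ⟨k, ⟨hk, hke⟩, rfl⟩, rfl⟩
    refine ⟨fun t => h t + k t, ⟨hc.add hk, fun t ht => ?_⟩, ?_⟩
    · rw [exp_add, he t ht, hke t ht]
    · rw [← exp_add, ← intervalIntegral.integral_add (hi h hc) (hi k hk)]
      congr 2
      ext t
      ring
end

section
/- Let γ : [a, b] → ℂ (a < b) be a piecewise continuously differentiable curve and let f, g : ℂ → ℂ be continuous and nowhere-vanishing on an open set containing the image of γ. Then the complex multiplicative integral satisfies the division property as a set equality: MInt(f/g, γ) = { w₁ / w₂ : w₁ ∈ MInt(f, γ), w₂ ∈ MInt(g, γ) }. -/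
open Complex

theorem intervalIntegrable_deriv_of_piecewiseC1On {γ : ℝ → ℂ} {a b : ℝ}
    (hγ : PiecewiseC1On γ a b) :
    IntervalIntegrable (deriv γ) MeasureTheory.volume a b := by
  obtain ⟨-, m, t, -, rfl, rfl, hlt, hC⟩ := hγ
  refine IntervalIntegrable.trans_iterate fun k hk => ?_
  have hle := (hlt k hk).le
  have hc : ContinuousOn (derivWithin γ (Set.Icc (t k) (t (k + 1)))) (Set.Icc (t k) (t (k + 1))) :=
    (hC k hk).continuousOn_derivWithin (uniqueDiffOn_Icc (hlt k hk)) le_rfl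
  refine IntervalIntegrable.congr_uIoo
    (f := derivWithin γ (Set.Icc (t k) (t (k + 1)))) ?_ ?_
  · apply ContinuousOn.intervalIntegrable
    rwa [Set.uIcc_of_le hle]
  · intro x hx
    rw [Set.uIoo_of_le hle] at hx
    exact derivWithin_of_mem_nhds (Icc_mem_nhds hx.1 hx.2)

theorem exists_isContinuousLog {a b : ℝ} (hab : a < b) {γ : ℝ → ℂ} {g : ℂ → ℂ}
    (hc : ContinuousOn (fun t => g (γ t)) (Set.Icc a b))
    (hne : ∀ t ∈ Set.Icc a b, g (γ t) ≠ 0) :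
    ∃ h, IsContinuousLog g γ a b h := by
  have hba : 0 < b - a := sub_pos.2 hab
  have hmem : ∀ s : unitInterval, a + s * (b - a) ∈ Set.Icc a b := fun s =>
    ⟨by nlinarith [s.2.1], by nlinarith [s.2.2]⟩
  have hcont : Continuous fun s : unitInterval => g (γ (a + s * (b - a))) :=
    hc.comp_continuous (by fun_prop) hmem
  let P : C(unitInterval, {z : ℂ // z ≠ 0}) :=
    ⟨fun s => ⟨g (γ (a + s * (b - a))), hne _ (hmem s)⟩, hcont.subtype_mk _⟩
  obtain ⟨Γ, hΓ, -⟩ := Complex.isCoveringMap_exp.exists_path_lifts P (Complex.log (P 0).1)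
    (Subtype.ext (Complex.exp_log (P 0).2).symm)
  refine ⟨fun t => Γ (Set.projIcc 0 1 zero_le_one ((t - a) / (b - a))), ?_, ?_⟩
  · have : Continuous fun t : ℝ => Γ (Set.projIcc 0 1 zero_le_one ((t - a) / (b - a))) :=
      Γ.continuous.comp (continuous_projIcc.comp (by fun_prop))
    exact this.continuousOn
  · intro t ht
    have h1 : (t - a) / (b - a) ∈ Set.Icc (0 : ℝ) 1 :=
      ⟨div_nonneg (sub_nonneg.2 ht.1) hba.le, (div_le_one hba).2 (by linarith [ht.2])⟩
    have h2 := congrArg Subtype.val (congrFun hΓ ⟨(t - a) / (b - a), h1⟩)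
    simp only [Set.projIcc_of_mem zero_le_one h1]
    have h3 : a + (t - a) / (b - a) * (b - a) = t := by
      rw [div_mul_cancel₀ _ hba.ne']; ring
    simpa [P, h3] using h2

/-- Theorem 7 (division property): the complex multiplicative integral of a quotient is the
set quotient of the complex multiplicative integrals:
`MInt (f/g, γ) = { w₁/w₂ : w₁ ∈ MInt (f, γ), w₂ ∈ MInt (g, γ) }`. -/
theorem multiplicative_integral_div
    (a b : ℝ) (hab : a < b)
    (γ : ℝ → ℂ) (hγ : PiecewiseC1On γ a b)
    (U : Set ℂ) (hU : IsOpen U) (hγU : ∀ t ∈ Set.Icc a b, γ t ∈ U)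
    (f g : ℂ → ℂ) (hf : ContinuousOn f U) (hg : ContinuousOn g U)
    (hfne : ∀ z ∈ U, f z ≠ 0) (hgne : ∀ z ∈ U, g z ≠ 0) :
    MInt (fun z => f z / g z) γ a b =
      {w | ∃ w₁ ∈ MInt f γ a b, ∃ w₂ ∈ MInt g γ a b, w = w₁ / w₂} := by
  have hint := intervalIntegrable_deriv_of_piecewiseC1On hγ
  have hI : ∀ h : ℝ → ℂ, ContinuousOn h (Set.Icc a b) →
      IntervalIntegrable (fun t => h t * deriv γ t) MeasureTheory.volume a b := fun h hh =>
    hint.continuousOn_mul (by rwa [Set.uIcc_of_le hab.le])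
  ext w
  constructor
  · rintro ⟨h, ⟨hc, he⟩, rfl⟩
    obtain ⟨k, hkc, hke⟩ := exists_isContinuousLog hab (γ := γ) (g := g)
      (hg.comp hγ.1 hγU) (fun t ht => hgne _ (hγU t ht))
    refine ⟨_, ⟨fun t => h t + k t, ⟨hc.add hkc, fun t ht => ?_⟩, rfl⟩, _,
      ⟨k, ⟨hkc, hke⟩, rfl⟩, ?_⟩
    · rw [Complex.exp_add, he t ht, hke t ht, div_mul_cancel₀ _ (hgne _ (hγU t ht))]
    · rw [← Complex.exp_sub, ← intervalIntegral.integral_sub (hI (fun t => h t + k t) (hc.add hkc)) (hI _ hkc)]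
      congr 2
      funext t
      ring
  · rintro ⟨_, ⟨h, ⟨hc, he⟩, rfl⟩, _, ⟨k, ⟨hkc, hke⟩, rfl⟩, rfl⟩
    refine ⟨fun t => h t - k t, ⟨hc.sub hkc, fun t ht => ?_⟩, ?_⟩
    · rw [Complex.exp_sub, he t ht, hke t ht]
    · rw [← Complex.exp_sub, ← intervalIntegral.integral_sub (hI _ hc) (hI _ hkc)]
      congr 2
      funext t
      ring
end

section
/- Let γ : [a, b] → ℂ (a < b) be a piecewise continuously differentiable curve, let f : ℂ → ℂ be continuous and nowhere-vanishing on an open set containing the image of γ, and let n ∈ ℤ. Then { wⁿ : w ∈ MInt(f, γ) } ⊆ MInt(fⁿ, γ), where fⁿ denotes the pointwise n-th (integer) power of f. -/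
open Complex

/-- Theorem 9 (raising to an integer power): `(∫_C f^{dz})^n ⊆ ∫_C (f^n)^{dz}`, i.e.
`{ wⁿ : w ∈ MInt (f, γ) } ⊆ MInt (fⁿ, γ)` for every integer `n`, where `fⁿ` is the
pointwise `n`-th integer power of `f`. -/
theorem multiplicative_integral_zpow
    (a b : ℝ) (hab : a < b)
    (γ : ℝ → ℂ) (hγ : PiecewiseC1On γ a b)
    (U : Set ℂ) (hU : IsOpen U) (hγU : ∀ t ∈ Set.Icc a b, γ t ∈ U)
    (f : ℂ → ℂ) (hf : ContinuousOn f U) (hne : ∀ z ∈ U, f z ≠ 0)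
    (n : ℤ) :
    {w | ∃ v ∈ MInt f γ a b, w = v ^ n} ⊆ MInt (fun z => f z ^ n) γ a b := by
  rintro w ⟨v, ⟨h, ⟨hc, he⟩, rfl⟩, rfl⟩
  refine ⟨fun t => (n : ℂ) * h t, ⟨continuousOn_const.mul hc, fun t ht => ?_⟩, ?_⟩
  · show Complex.exp ((n : ℂ) * h t) = f (γ t) ^ n
    rw [Complex.exp_int_mul, he t ht]
  · simp only [mul_assoc]
    rw [intervalIntegral.integral_const_mul, Complex.exp_int_mul]
end

section
/- Let D ⊆ ℂ be open and connected, let f : ℂ → ℂ be holomorphic and nowhere-vanishing on D, and let γ : [a, b] → D (a < b) be a piecewise continuously differentiable curve. Let f* : D → ℂ be the multiplicative derivative f*(z) = exp(f'(z)/f(z)), which is continuous and nowhere-vanishing. Then the fundamental theorem of calculus for complex multiplicative integrals holds: MInt(f*, γ) = { exp(2π·n·i·(γ(b) − γ(a))) · f(γ(b)) / f(γ(a)) : n ∈ ℤ }. In particular the branch value exp(∫_a^b (f'(γ(t))/f(γ(t)))·γ'(t) dt) equals f(γ(b))/f(γ(a)), so the complex multiplicative integral of f* depends only on the endpoints of γ.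 -/
open Complex

open Set MeasureTheory intervalIntegral Topology in
theorem aux_find (t : ℕ → ℝ) (x : ℝ) (m : ℕ) (h0 : t 0 < x) (hm : x < t m)
    (hS : ∀ k, x ≠ t k) : ∃ k < m, t k < x ∧ x < t (k + 1) := by
  induction m with
  | zero => exact absurd h0 (not_lt.2 hm.le)
  | succ m ih =>
    rcases lt_or_gt_of_ne (hS m) with h | h
    · obtain ⟨k, hk, hk'⟩ := ih h
      exact ⟨k, by omega, hk'⟩
    · exact ⟨m, by omega, h, hm⟩

open Set MeasureTheory intervalIntegral Topology in
theorem aux_pw {γ : ℝ → ℂ} {a b : ℝ} (hγ : PiecewiseC1On γ a b) :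
    IntervalIntegrable (deriv γ) volume a b ∧
    ∃ S : Set ℝ, S.Countable ∧ ∀ x ∈ Ioo a b \ S,
      DifferentiableAt ℝ γ x ∧ ContinuousAt (deriv γ) x := by
  obtain ⟨-, m, t, hm, rfl, rfl, hlt, hC⟩ := hγ
  constructor
  · apply IntervalIntegrable.trans_iterate
    intro k hk
    have hc := (hC k hk).continuousOn_derivWithin (uniqueDiffOn_Icc (hlt k hk)) le_rfl
    have hi : IntervalIntegrable (derivWithin γ (Icc (t k) (t (k + 1)))) volume (t k) (t (k+1)) :=
      ContinuousOn.intervalIntegrable_of_Icc (hlt k hk).le hc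
    refine hi.congr_uIoo ?_
    intro x hx
    rw [uIoo_of_le (hlt k hk).le] at hx
    exact derivWithin_of_mem_nhds (Icc_mem_nhds hx.1 hx.2)
  · refine ⟨range t, countable_range t, ?_⟩
    rintro x ⟨hx, hxS⟩
    obtain ⟨k, hk, h1, h2⟩ := aux_find t x m hx.1 hx.2 (fun k e => hxS ⟨k, e.symm⟩)
    have hd : ContDiffAt ℝ 1 γ x := (hC k hk).contDiffAt (Icc_mem_nhds h1 h2)
    refine ⟨hd.differentiableAt (by norm_num), ?_⟩
    have hc := (((hC k hk).mono Ioo_subset_Icc_self).continuousOn_deriv_of_isOpen isOpen_Ioo le_rfl)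
    exact hc.continuousAt (Ioo_mem_nhds h1 h2)

open Set MeasureTheory intervalIntegral Topology in
theorem aux_int {γ h : ℝ → ℂ} {a b : ℝ} (hab : a < b) (hγ : PiecewiseC1On γ a b)
    (hh : ContinuousOn h (Icc a b)) :
    IntervalIntegrable (fun t => h t * deriv γ t) volume a b := by
  apply (aux_pw hγ).1.continuousOn_mul
  rwa [uIcc_of_le hab.le]

open Set MeasureTheory intervalIntegral Topology in
theorem aux_deriv {γ : ℝ → ℂ} {a b : ℝ} (hab : a < b) (hγ : PiecewiseC1On γ a b) :
    ∫ t in a..b, deriv γ t = γ b - γ a := by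
  obtain ⟨hi, S, hS, hd⟩ := aux_pw hγ
  exact integral_eq_of_hasDerivAt_off_countable_of_le γ (deriv γ) hab.le hS hγ.1
    (fun x hx => (hd x hx).1.hasDerivAt) hi

open Set MeasureTheory intervalIntegral Topology in
theorem aux_main {D : Set ℂ} (hD : IsOpen D)
    {f : ℂ → ℂ} (hf : DifferentiableOn ℂ f D) (hne : ∀ z ∈ D, f z ≠ 0)
    {a b : ℝ} (hab : a < b)
    {γ : ℝ → ℂ} (hγ : PiecewiseC1On γ a b) (hγD : ∀ t ∈ Set.Icc a b, γ t ∈ D)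
    (hL : ContinuousOn (fun t => deriv f (γ t) / f (γ t)) (Icc a b)) :
    Complex.exp (∫ t in a..b, (deriv f (γ t) / f (γ t)) * deriv γ t) =
      f (γ b) / f (γ a) := by
  have hi := aux_int hab hγ hL
  obtain ⟨-, S, hS, hd⟩ := aux_pw hγ
  set g : ℝ → ℂ := fun t => (deriv f (γ t) / f (γ t)) * deriv γ t with hg
  have hu : ContinuousOn (fun x => ∫ t in a..x, g t) (Icc a b) := by
    have := continuousOn_primitive_interval' hi left_mem_uIcc
    rwa [uIcc_of_le hab.le] at this
  have key := integral_eq_of_hasDerivAt_off_countable_of_le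
    (fun x => f (γ x) * Complex.exp (-∫ t in a..x, g t)) (fun _ => 0) hab.le hS
    ((hf.continuousOn.comp hγ.1 hγD).mul hu.neg.cexp) ?_ (by simp)
  · simp only [intervalIntegral.integral_zero, integral_same, neg_zero, Complex.exp_zero, mul_one] at key
    have h1 := sub_eq_zero.1 key.symm
    rw [Complex.exp_neg] at h1
    have h2 := Complex.exp_ne_zero (∫ t in a..b, g t)
    have h3 := hne _ (hγD a (left_mem_Icc.2 hab.le))
    field_simp at h1 ⊢
    rw [h1]
    try ring
  · intro x hx
    obtain ⟨hx1, hx2⟩ := hd x hx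
    have hxI : Icc a b ∈ 𝓝 x := Icc_mem_nhds hx.1.1 hx.1.2
    have hxc : x ∈ Icc a b := Ioo_subset_Icc_self hx.1
    have hu' : HasDerivAt (fun x => ∫ t in a..x, g t) (g x) x := by
      apply integral_hasDerivAt_right
      · exact hi.mono_set (by
          rw [uIcc_of_le hab.le, uIcc_of_le hx.1.1.le]; exact Icc_subset_Icc_right hx.1.2.le)
      · exact ⟨Ioc a b, Ioc_mem_nhds hx.1.1 hx.1.2, hi.1.aestronglyMeasurable⟩
      · exact (hL.continuousAt hxI).mul hx2
    have hfx := (hf.differentiableAt (hD.mem_nhds (hγD x hxc))).hasDerivAt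
    have hc : HasDerivAt (fun x => f (γ x)) (deriv f (γ x) * deriv γ x) x :=
      hfx.comp x hx1.hasDerivAt
    have := hc.mul hu'.neg.cexp
    refine this.congr_deriv ?_
    have h3 := hne _ (hγD x hxc)
    simp only [hg]
    field_simp
    try ring

open Set MeasureTheory intervalIntegral Topology in
theorem aux_const {a b : ℝ} (hab : a < b) {h l : ℝ → ℂ} (hh : ContinuousOn h (Icc a b))
    (hl : ContinuousOn l (Icc a b))
    (he : ∀ t ∈ Icc a b, Complex.exp (h t) = Complex.exp (l t)) :
    ∃ n : ℤ, ∀ t ∈ Icc a b, h t = l t + n * (2 * Real.pi * I) := by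
  have h1 : ∀ t : Icc a b, ∃ n : ℤ, h t = l t + n * (2 * Real.pi * I) :=
    fun t => Complex.exp_eq_exp_iff_exists_int.1 (he t t.2)
  choose n hn using h1
  have hc : Continuous n := by
    rw [Int.isClosedEmbedding_coe_real.isEmbedding.continuous_iff]
    have e : (Int.cast ∘ n : Icc a b → ℝ) = fun t : Icc a b => ((h t - l t) / (2 * Real.pi * I)).re := by
      funext t
      have : (h t - l t) / (2 * Real.pi * I) = ((n t : ℝ) : ℂ) := by
        rw [hn t, add_sub_cancel_left, mul_div_cancel_right₀ _ Complex.two_pi_I_ne_zero]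
        simp
      rw [this, Complex.ofReal_re]
      rfl
    rw [e]
    exact Complex.continuous_re.comp
      ((hh.restrict.sub hl.restrict).div_const _)
  haveI : PreconnectedSpace (Icc a b) := Subtype.preconnectedSpace isPreconnected_Icc
  refine ⟨n ⟨a, left_mem_Icc.2 hab.le⟩, fun t ht => ?_⟩
  rw [hn ⟨t, ht⟩, PreconnectedSpace.constant inferInstance hc (x := ⟨t, ht⟩)]

/-- Theorem 10 (fundamental theorem of calculus for complex multiplicative integrals): for
`f` holomorphic and nowhere-vanishing on the open connected set `D`, the multiplicative
derivative `f*(z) = exp (f'(z)/f(z))` is continuous and nowhere-vanishing, and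
`MInt (f*, γ) = { exp (2π·n·i·(γ b − γ a)) · f (γ b) / f (γ a) : n ∈ ℤ }`; in particular
the branch value `exp (∫_a^b (f'(γ t)/f(γ t))·γ'(t) dt)` equals `f (γ b)/f (γ a)`, so the
complex multiplicative integral of `f*` depends only on the endpoints of `γ`. -/
theorem fundamental_theorem_complex_multiplicative_integral
    (D : Set ℂ) (hD : IsOpen D) (hDconn : IsConnected D)
    (f : ℂ → ℂ) (hf : DifferentiableOn ℂ f D) (hne : ∀ z ∈ D, f z ≠ 0)
    (a b : ℝ) (hab : a < b)
    (γ : ℝ → ℂ) (hγ : PiecewiseC1On γ a b) (hγD : ∀ t ∈ Set.Icc a b, γ t ∈ D) :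
    ContinuousOn (fun z => Complex.exp (deriv f z / f z)) D ∧
    (∀ z ∈ D, Complex.exp (deriv f z / f z) ≠ 0) ∧
    MInt (fun z => Complex.exp (deriv f z / f z)) γ a b =
      {w | ∃ n : ℤ,
        w = Complex.exp (2 * Real.pi * (n : ℂ) * I * (γ b - γ a)) * f (γ b) / f (γ a)} ∧
    Complex.exp (∫ t in a..b, (deriv f (γ t) / f (γ t)) * deriv γ t) =
      f (γ b) / f (γ a) := by
  have hLD : ContinuousOn (fun z => deriv f z / f z) D :=
    (hf.deriv hD).continuousOn.div hf.continuousOn hne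
  have hL : ContinuousOn (fun t => deriv f (γ t) / f (γ t)) (Set.Icc a b) :=
    hLD.comp hγ.1 hγD
  have hmain := aux_main hD hf hne hab hγ hγD hL
  have hval : ∀ (n : ℤ) (h : ℝ → ℂ),
      (∀ t ∈ Set.Icc a b, h t = deriv f (γ t) / f (γ t) + n * (2 * Real.pi * I)) →
      Complex.exp (∫ t in a..b, h t * deriv γ t) =
        Complex.exp (2 * Real.pi * (n : ℂ) * I * (γ b - γ a)) * f (γ b) / f (γ a) := by
    intro n h hh
    have e : ∫ t in a..b, h t * deriv γ t =
        ∫ t in a..b, (deriv f (γ t) / f (γ t) * deriv γ t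
          + (n * (2 * Real.pi * I)) * deriv γ t) := by
      apply intervalIntegral.integral_congr
      intro t ht
      rw [Set.uIcc_of_le hab.le] at ht
      simp only [hh t ht, add_mul]
    rw [e, intervalIntegral.integral_add (aux_int hab hγ hL) ((aux_pw hγ).1.const_mul _),
      intervalIntegral.integral_const_mul, aux_deriv hab hγ, Complex.exp_add, hmain,
      mul_div_assoc, mul_comm]
    congr 2
    ring
  refine ⟨hLD.cexp, fun z _ => Complex.exp_ne_zero _, ?_, hmain⟩
  ext w
  constructor
  · rintro ⟨h, ⟨hc, he⟩, rfl⟩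
    obtain ⟨n, hn⟩ := aux_const hab hc hL he
    exact ⟨n, hval n h hn⟩
  · rintro ⟨n, rfl⟩
    refine ⟨fun t => deriv f (γ t) / f (γ t) + n * (2 * Real.pi * I),
      ⟨hL.add continuousOn_const, fun t _ => ?_⟩, (hval n _ (fun t _ => rfl)).symm⟩
    exact Complex.exp_eq_exp_iff_exists_int.2 ⟨n, rfl⟩
end

section
/- Let D ⊆ ℂ be open and connected, let f : ℂ → ℂ be holomorphic and nowhere-vanishing on D, and let γ : [a, b] → D (a < b) be a piecewise continuously differentiable closed curve, i.e. γ(a) = γ(b). Let f* : D → ℂ be the multiplicative derivative f*(z) = exp(f'(z)/f(z)). Then every branch value of the complex multiplicative integral of f* along γ equals 1; that is, MInt(f*, γ) = {1}, so the multiplicative integral ∮_C (f*)^{dz} is single-valued and equal to 1. -/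
open Complex

lemma piece_aux (D : Set ℂ) (hD : IsOpen D)
    (f : ℂ → ℂ) (hf : DifferentiableOn ℂ f D) (hne : ∀ z ∈ D, f z ≠ 0)
    (s u : ℝ) (hsu : s < u) (γ : ℝ → ℂ) (hγ : ContDiffOn ℝ 1 γ (Set.Icc s u))
    (hγD : ∀ t ∈ Set.Icc s u, γ t ∈ D) (c : ℂ) (h : ℝ → ℂ)
    (hc : ContinuousOn h (Set.Icc s u))
    (hh : ∀ t ∈ Set.Icc s u, h t = deriv f (γ t) / f (γ t) + c) :
    IntervalIntegrable (fun t => h t * deriv γ t) MeasureTheory.volume s u ∧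
    f (γ u) * Complex.exp (c * γ u) =
      f (γ s) * Complex.exp (c * γ s) * Complex.exp (∫ t in s..u, h t * deriv γ t) := by
  set φ : ℝ → ℂ := fun t => h t * derivWithin γ (Set.Icc s u) t with hφ
  have hφc : ContinuousOn φ (Set.Icc s u) :=
    hc.mul (hγ.continuousOn_derivWithin (uniqueDiffOn_Icc hsu) le_rfl)
  have heq : Set.EqOn φ (fun t => h t * deriv γ t) (Set.Ioo s u) := by
    intro t ht
    simp only [hφ]
    rw [derivWithin_of_mem_nhds (Icc_mem_nhds ht.1 ht.2)]
  have hφi : IntervalIntegrable φ MeasureTheory.volume s u :=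
    ContinuousOn.intervalIntegrable (by rwa [Set.uIcc_of_le hsu.le])
  have hint : ∫ t in s..u, h t * deriv γ t = ∫ t in s..u, φ t := by
    rw [intervalIntegral.integral_of_le hsu.le, intervalIntegral.integral_of_le hsu.le,
      MeasureTheory.integral_Ioc_eq_integral_Ioo, MeasureTheory.integral_Ioc_eq_integral_Ioo]
    exact (MeasureTheory.setIntegral_congr_fun measurableSet_Ioo heq).symm
  refine ⟨?_, ?_⟩
  · rw [intervalIntegrable_iff_integrableOn_Ioo_of_le hsu.le] at hφi ⊢
    exact hφi.congr_fun heq measurableSet_Ioo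
  rw [hint]
  set ψ : ℝ → ℂ := Set.IccExtend hsu.le ((Set.Icc s u).domRestrict φ) with hψ
  have hψc : Continuous ψ := (continuousOn_iff_continuous_domRestrict.1 hφc).Icc_extend'
  have hψe : ∀ t ∈ Set.Icc s u, ψ t = φ t := fun t ht => by
    simp [hψ, Set.IccExtend_of_mem _ _ ht]
  have hint2 : ∫ t in s..u, φ t = ∫ t in s..u, ψ t := by
    apply intervalIntegral.integral_congr
    intro t ht
    rw [Set.uIcc_of_le hsu.le] at ht
    exact (hψe t ht).symm
  rw [hint2]
  set G : ℝ → ℂ := fun x => f (γ x) * Complex.exp (c * γ x) * Complex.exp (-∫ t in s..x, ψ t)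
  have hG : ∀ x ∈ Set.Icc s u, HasDerivWithinAt G 0 (Set.Icc s u) x := by
    intro x hx
    have h1 : HasDerivWithinAt γ (derivWithin γ (Set.Icc s u) x) (Set.Icc s u) x :=
      ((hγ.differentiableOn (by norm_num)) x hx).hasDerivWithinAt
    have h2 : HasDerivAt f (deriv f (γ x)) (γ x) :=
      (hf.differentiableAt (hD.mem_nhds (hγD x hx))).hasDerivAt
    have h3 := h2.comp_hasDerivWithinAt x h1
    have h4 := (h1.const_mul c).cexp
    have h5 : HasDerivWithinAt (fun x => ∫ t in s..x, ψ t) (ψ x) (Set.Icc s u) x :=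
      (hψc.integral_hasStrictDerivAt s x).hasDerivAt.hasDerivWithinAt
    have h6 := (h3.mul h4).mul h5.neg.cexp
    refine h6.congr_deriv ?_
    have := hne _ (hγD x hx)
    simp only [Pi.neg_apply, Pi.mul_apply, Function.comp_apply]
    rw [hψe x hx]
    simp only [hφ]
    rw [hh x hx]
    field_simp
    ring
  have hGc : G u = G s := by
    refine constant_of_derivWithin_zero (fun x hx => (hG x hx).differentiableWithinAt)
      (fun x hx => (hG x (Set.Ico_subset_Icc_self hx)).derivWithin
        (uniqueDiffOn_Icc hsu x (Set.Ico_subset_Icc_self hx))) u ⟨hsu.le, le_rfl⟩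
  simp only [G, intervalIntegral.integral_same, neg_zero, Complex.exp_zero, mul_one] at hGc
  rw [← hGc, mul_assoc, ← Complex.exp_add]
  simp

lemma const_aux (a b : ℝ) (hab : a < b) (d : ℝ → ℂ) (hd : ContinuousOn d (Set.Icc a b))
    (h1 : ∀ t ∈ Set.Icc a b, Complex.exp (d t) = 1) : ∀ t ∈ Set.Icc a b, d t = d a := by
  have ha : a ∈ Set.Icc a b := ⟨le_rfl, hab.le⟩
  have hinj : IsLocallyInjective Complex.exp := by
    rw [isLocallyInjective_iff_nhds]
    intro z
    have hs := (Complex.hasStrictDerivAt_exp z)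
    have := (hs.hasStrictFDerivAt_equiv (Complex.exp_ne_zero z))
    obtain ⟨U, hU⟩ : ∃ U ∈ nhds z, Set.InjOn Complex.exp U :=
      ⟨_, (this.toOpenPartialHomeomorph _).open_source.mem_nhds
        this.mem_toOpenPartialHomeomorph_source, (this.toOpenPartialHomeomorph _).injOn⟩
    exact ⟨U, hU⟩
  exact (T2Space.isSeparatedMap Complex.exp).eqOn_of_comp_eqOn hinj isPreconnected_Icc hd
    continuousOn_const (fun t ht => by simp [h1 t ht, h1 a ha]) ha rfl

/-- Corollary 1: for `f` holomorphic and nowhere-vanishing on the open connected set `D`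
and a piecewise `C¹` closed curve `γ` in `D`, every branch value of the complex
multiplicative integral of the multiplicative derivative `f* = exp (f'/f)` along `γ`
equals `1`: `∮_C (f*)^{dz} = 1` single-valuedly, i.e. `MInt (f*, γ) = {1}`. -/
theorem multiplicative_integral_closed_curve_eq_one
    (D : Set ℂ) (hD : IsOpen D) (hDconn : IsConnected D)
    (f : ℂ → ℂ) (hf : DifferentiableOn ℂ f D) (hne : ∀ z ∈ D, f z ≠ 0)
    (a b : ℝ) (hab : a < b)
    (γ : ℝ → ℂ) (hγ : PiecewiseC1On γ a b) (hγD : ∀ t ∈ Set.Icc a b, γ t ∈ D)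
    (hclosed : γ a = γ b) :
    MInt (fun z => Complex.exp (deriv f z / f z)) γ a b = {1} := by
  obtain ⟨hγc, m, t, hm, ht0, htm, hlt, hC⟩ := hγ
  have hqc : ContinuousOn (fun x => deriv f (γ x) / f (γ x)) (Set.Icc a b) := by
    have h1 : ContinuousOn (fun z => deriv f z / f z) D :=
      (hf.deriv hD).continuousOn.div hf.continuousOn hne
    exact h1.comp hγc hγD
  have key : ∀ h : ℝ → ℂ, IsContinuousLog (fun z => Complex.exp (deriv f z / f z)) γ a b h →
      Complex.exp (∫ t in a..b, h t * deriv γ t) = 1 := by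
    rintro h ⟨hc, he⟩
    have hcst := const_aux a b hab (fun x => h x - deriv f (γ x) / f (γ x)) (hc.sub hqc)
      (fun x hx => by rw [Complex.exp_sub, he x hx, div_self (Complex.exp_ne_zero _)])
    set c := h a - deriv f (γ a) / f (γ a) with hcdef
    have hh : ∀ x ∈ Set.Icc a b, h x = deriv f (γ x) / f (γ x) + c := fun x hx => by
      have := hcst x hx
      rw [← this]; ring
    have hmono : ∀ j ≤ m, ∀ i ≤ j, t i ≤ t j := by
      intro j
      induction j with
      | zero => intro _ i hi; rw [Nat.le_zero.1 hi]
      | succ j ih =>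
        intro hj i hi
        rcases Nat.lt_or_ge i (j + 1) with h' | h'
        · exact (ih (by omega) i (by omega)).trans (hlt j (by omega)).le
        · rw [le_antisymm hi h']
    have hsub : ∀ k < m, Set.Icc (t k) (t (k + 1)) ⊆ Set.Icc a b := fun k hk =>
      Set.Icc_subset_Icc (ht0 ▸ hmono k hk.le 0 (Nat.zero_le _))
        (htm ▸ hmono m le_rfl (k + 1) hk)
    have hind : ∀ k ≤ m,
        IntervalIntegrable (fun t => h t * deriv γ t) MeasureTheory.volume a (t k) ∧
        f (γ (t k)) * Complex.exp (c * γ (t k)) =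
          f (γ a) * Complex.exp (c * γ a) *
            Complex.exp (∫ t in a..(t k), h t * deriv γ t) := by
      intro k
      induction k with
      | zero => intro _; rw [ht0]; simp
      | succ k ih =>
        intro hk
        obtain ⟨i1, e1⟩ := ih (by omega)
        have hs := hsub k hk
        obtain ⟨i2, e2⟩ := piece_aux D hD f hf hne _ _ (hlt k hk) γ (hC k hk)
          (fun x hx => hγD x (hs hx)) c h (hc.mono hs) (fun x hx => hh x (hs hx))
        refine ⟨i1.trans i2, ?_⟩
        rw [e2, e1, mul_assoc, ← Complex.exp_add,
          intervalIntegral.integral_add_adjacent_intervals i1 i2]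
    have hfin := (hind m le_rfl).2
    rw [htm, ← hclosed] at hfin
    have hnz : f (γ a) * Complex.exp (c * γ a) ≠ 0 :=
      mul_ne_zero (hne _ (hγD a ⟨le_rfl, hab.le⟩)) (Complex.exp_ne_zero _)
    exact (mul_eq_left₀ hnz).1 hfin.symm
  ext w
  simp only [MInt, Set.mem_ofPred_eq, Set.mem_singleton_iff]
  constructor
  · rintro ⟨h, hl, rfl⟩
    exact key h hl
  · rintro rfl
    have hl : IsContinuousLog (fun z => Complex.exp (deriv f z / f z)) γ a b
        (fun x => deriv f (γ x) / f (γ x)) := ⟨hqc, fun _ _ => rfl⟩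
    exact ⟨_, hl, (key _ hl).symm⟩
end
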